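/- In the tree block setting, assuming (A1) and (A2), there is a universal constant C₀ > 0 (independent of d, G, T, μ and the partition) such that for every σ̂ ∈ Ω_𝓡, | π_𝓡(σ̂)·|Ω_𝓡| − 1 | ≤ C₀/d, where π_𝓡(σ̂) = |{σ ∈ Ω^μ_E : σ|_F = σ̂}| / |Ω^μ_E| is the projection onto F of the uniform distribution on Ω^μ_E. -/

import Mathlib

/-!
The sizes of any two fibres of the projection `σ ↦ σ|_F` are compared by changing the prescribed
colours on `F` one edge at a time. Conflicts inside `F` are ignored on the way, so the order does
not matter. To change the colour of `e` from `a` to `c`, the two colours are exchanged on the block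
hanging from `e`. If no edge of the block, except possibly `e`, is on the interior boundary of `T`,
nothing obstructs this, and the number of extensions does not decrease.

Otherwise the block, being splitting, has exactly one further edge `b` on its interior boundary,
which is not incident to `e`. Then the path from `e` to `b` continues with edges `h` and `q` after
`e`, where possibly `q = b`. Exchanging the colours only on the part of the block before `h` works
if `h` does not have the colour `c`. If it does, the colour of `h` can be exchanged, on the part of
the block before `q`, for each of the `d - 2` or more colours other than `c` and those of `e` and
`q`. As the original can be recovered from the result, the bad extensions are outnumbered by a
factor `d - 2`, so the number of extensions decreases at most by the factor `(d - 1) / (d - 2)`.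

At most two edges are on the interior boundary of `T`, so any two fibres agree in size up to the
factor `((d - 1) / (d - 2)) ^ 2 ≤ 1 + 9 / d`, and so do each fibre and the average fibre.
-/

open Finset
open scoped Classical

section Markov

variable {Ω : Type*} [Fintype Ω]

/-- A generator matrix: nonnegative off-diagonal entries, zero row sums. -/
def IsGenerator (L : Ω → Ω → ℝ) : Prop :=
  (∀ x y : Ω, x ≠ y → 0 ≤ L x y) ∧ (∀ x : Ω, ∑ y : Ω, L x y = 0)

/-- A transition of a generator matrix. -/
def IsTransition (L : Ω → Ω → ℝ) (x y : Ω) : Prop := x ≠ y ∧ 0 < L x y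

/-- Ergodicity: the directed graph of transitions is strongly connected. -/
def IsErgodicGen (L : Ω → Ω → ℝ) : Prop :=
  ∀ x y : Ω, Relation.ReflTransGen (IsTransition L) x y

/-- Reversibility with respect to a distribution π. -/
def IsReversible (L : Ω → Ω → ℝ) (π : Ω → ℝ) : Prop :=
  ∀ x y : Ω, π x * L x y = π y * L y x

/-- The variance form. -/
noncomputable def VarForm (π : Ω → ℝ) (f : Ω → ℝ) : ℝ :=
  (1 / 2) * ∑ a : Ω, ∑ b : Ω, π a * π b * (f a - f b) ^ 2

/-- The Dirichlet form. -/
noncomputable def DirForm (π : Ω → ℝ) (L : Ω → Ω → ℝ) (f : Ω → ℝ) : ℝ :=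
  (1 / 2) * ∑ a : Ω, ∑ b : Ω, π a * L a b * (f a - f b) ^ 2

/-- The spectral gap: infimum (= minimum) of the Rayleigh quotient over nonconstant functions. -/
noncomputable def specGap (π : Ω → ℝ) (L : Ω → Ω → ℝ) : ℝ :=
  sInf {r : ℝ | ∃ f : Ω → ℝ, (∃ a b : Ω, f a ≠ f b) ∧ r = DirForm π L f / VarForm π f}

/-- The relaxation time, with the convention that it equals 1 on a one-point space. -/
noncomputable def relaxTime (π : Ω → ℝ) (L : Ω → Ω → ℝ) : ℝ :=
  if ∃ a b : Ω, a ≠ b then 1 / specGap π L else 1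

/-- The uniform distribution on a finite type. -/
noncomputable def unif (Ω : Type*) [Fintype Ω] : Ω → ℝ := fun _ => 1 / (Fintype.card Ω : ℝ)

end Markov

section Glauber

variable {I : Type*} [Fintype I] {k : ℕ} {S : Type*} [Fintype S] [DecidableEq S]

/-- Off-diagonal entry of the Glauber dynamics: if the two states differ at exactly one site,
the rate of that site; otherwise `0`. -/
noncomputable def glauberOff (p : I → ℝ) (val : S → I → Fin k) (a b : S) : ℝ :=
  if (Finset.univ.filter fun w => val a w ≠ val b w).card = 1 then
    ∑ w ∈ Finset.univ.filter fun w => val a w ≠ val b w, p w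
  else 0

/-- The Glauber dynamics generator with site rates `p`, on a state space `S` of configurations
(described by `val : S → I → Fin k`): off-diagonal entries are the rate of the unique differing
site, diagonal entries make row sums vanish. -/
noncomputable def glauber (p : I → ℝ) (val : S → I → Fin k) : S → S → ℝ :=
  fun σ η =>
    if σ = η then -∑ η' ∈ Finset.univ.filter fun b => b ≠ σ, glauberOff p val σ η'
    else glauberOff p val σ η

end Glauber

section Trees

variable {V : Type} [Fintype V] [DecidableEq V]

/-- Two edges are incident if they are distinct and share an endpoint. -/
def EdgeInc (e f : Sym2 V) : Prop := e ≠ f ∧ ∃ v : V, v ∈ e ∧ v ∈ f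

/-- A proper `k`-edge-colouring of `G` (total map on `Sym2 V`, constrained on edges). -/
def ProperECol (G : SimpleGraph V) {k : ℕ} (σ : Sym2 V → Fin k) : Prop :=
  ∀ e ∈ G.edgeSet, ∀ f ∈ G.edgeSet, EdgeInc e f → σ e ≠ σ f

/-- `Ω^χ_{E'}`: proper edge-colourings of `G` agreeing with `χ` off `E'`. -/
abbrev OmegaE (G : SimpleGraph V) (k : ℕ) (E' : Finset (Sym2 V)) (χ : Sym2 V → Fin k) :=
  {σ : Sym2 V → Fin k // ProperECol G σ ∧ ∀ e ∉ E', σ e = χ e}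

/-- The Glauber dynamics `𝓛^χ_{E'}` for `k`-edge-colourings: each edge is updated at
rate `1/k`. -/
noncomputable def treeGen (G : SimpleGraph V) (k : ℕ) (E' : Finset (Sym2 V))
    (χ : Sym2 V → Fin k) : OmegaE G k E' χ → OmegaE G k E' χ → ℝ :=
  glauber (fun _ : Sym2 V => 1 / (k : ℝ)) (fun σ => σ.1)

variable (G : SimpleGraph V) [DecidableRel G.Adj]

/-- The exterior boundary `∂T` of the subtree with edge set `ET`. -/
noncomputable def extBd (ET : Finset (Sym2 V)) : Finset (Sym2 V) :=
  (G.edgeFinset \ ET).filter fun e => ∃ f ∈ ET, EdgeInc e f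

/-- The interior boundary `∂̄T` of the subtree with edge set `ET`. -/
noncomputable def intBd (ET : Finset (Sym2 V)) : Finset (Sym2 V) :=
  ET.filter fun e => ∃ f ∈ extBd G ET, EdgeInc e f

/-- Degree of a vertex in the subtree with edge set `ET`. -/
noncomputable def degT (ET : Finset (Sym2 V)) (v : V) : ℕ :=
  (ET.filter fun e => v ∈ e).card

/-- An edge set is connected (spans a subtree, inside a forest) if any two of its edges are
linked by a chain of pairwise incident edges within the set. -/
def EdgeConnectedSet (ET : Finset (Sym2 V)) : Prop :=
  ∀ e ∈ ET, ∀ f ∈ ET,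
    Relation.ReflTransGen (fun a b => a ∈ ET ∧ b ∈ ET ∧ EdgeInc a b) e f

/-- A splitting subtree (given by its nonempty connected edge set `ET`): either a single
edge, or a subtree with fringe interior boundary of size at most 2 whose two interior
boundary edges (if there are two) are non-incident. -/
def IsSplitting (ET : Finset (Sym2 V)) : Prop :=
  ET ⊆ G.edgeFinset ∧ ET.Nonempty ∧ EdgeConnectedSet ET ∧
  (ET.card = 1 ∨
    ((∀ e ∈ intBd G ET, ∃ v : V, v ∈ e ∧ degT ET v = 1) ∧
     (intBd G ET).card ≤ 2 ∧
     ∀ e ∈ intBd G ET, ∀ f ∈ intBd G ET, e ≠ f → ¬ EdgeInc e f))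

end Trees

section TreeBlocks

variable {V : Type} [Fintype V] [DecidableEq V] (G : SimpleGraph V) [DecidableRel G.Adj]

/-- The block of edges hanging from the edge `e0`, relative to a set `R` of root vertices:
the edges of `ET` reachable from `e0` by chains of incident edges meeting at vertices
outside `R`. -/
noncomputable def hangBlock (ET : Finset (Sym2 V)) (R : Finset V) (e0 : Sym2 V) :
    Finset (Sym2 V) :=
  ET.filter fun f => Relation.ReflTransGen
    (fun a b => a ∈ ET ∧ b ∈ ET ∧ EdgeInc a b ∧ ∃ v : V, v ∈ a ∧ v ∈ b ∧ v ∉ R) e0 f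

/-- Vertex-rooted block partition: `T` is rooted at an internal vertex `r0` of `T`, the
distinguished edges `roots i` are exactly the edges of `T` at `r0`, and each block is the
subtree of `T` hanging from its distinguished edge. -/
def IsVertexRooted (ET : Finset (Sym2 V)) {r : ℕ}
    (blocks : Fin r → Finset (Sym2 V)) (roots : Fin r → Sym2 V) : Prop :=
  ∃ r0 : V, 2 ≤ degT ET r0 ∧ Function.Injective roots ∧
    (∀ i, roots i ∈ ET ∧ r0 ∈ roots i) ∧
    (∀ f ∈ ET, r0 ∈ f → ∃ i, roots i = f) ∧
    (∀ i, blocks i = hangBlock ET {r0} (roots i))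

/-- Edge-rooted block partition: `T` is rooted at an edge `e` of `T`, not in the interior
boundary, with both endpoints internal to `T`; the blocks are `{e}` together with the
subtrees hanging from each edge of `T` incident to `e`. -/
def IsEdgeRooted (ET : Finset (Sym2 V)) {r : ℕ}
    (blocks : Fin r → Finset (Sym2 V)) (roots : Fin r → Sym2 V) : Prop :=
  ∃ e : Sym2 V, e ∈ ET ∧ e ∉ intBd G ET ∧ (∀ v ∈ e, 2 ≤ degT ET v) ∧
    Function.Injective roots ∧
    (∃ i0, roots i0 = e ∧ blocks i0 = {e}) ∧
    (∀ i, roots i = e ∨ (roots i ∈ ET ∧ roots i ≠ e ∧ EdgeInc e (roots i) ∧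
      blocks i = hangBlock (ET.erase e) (Finset.univ.filter fun v => v ∈ e) (roots i))) ∧
    (∀ f ∈ ET, f ≠ e → EdgeInc e f → ∃ i, roots i = f)

/-- The tree block setting: a vertex-rooted or edge-rooted block partition. -/
def TreeBlockSetting (ET : Finset (Sym2 V)) {r : ℕ}
    (blocks : Fin r → Finset (Sym2 V)) (roots : Fin r → Sym2 V) : Prop :=
  IsVertexRooted ET blocks roots ∨ IsEdgeRooted G ET blocks roots

/-- `g_i`: the minimum over boundary conditions `σ ∈ Ω^μ_E` of the spectral gap of the
Glauber dynamics on the block `E_i`. -/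
noncomputable def blockGapE (d : ℕ) (ET : Finset (Sym2 V)) (μ : Sym2 V → Fin (d + 1))
    {r : ℕ} (blocks : Fin r → Finset (Sym2 V)) (i : Fin r) : ℝ :=
  sInf {x : ℝ | ∃ σ : OmegaE G (d + 1) ET μ,
    x = specGap (unif (OmegaE G (d + 1) (blocks i) σ.1)) (treeGen G (d + 1) (blocks i) σ.1)}

/-- `τ_i`: the maximum over boundary conditions `σ ∈ Ω^μ_E` of the relaxation time of the
Glauber dynamics on the block `E_i`. -/
noncomputable def blockTauE (d : ℕ) (ET : Finset (Sym2 V)) (μ : Sym2 V → Fin (d + 1))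
    {r : ℕ} (blocks : Fin r → Finset (Sym2 V)) (i : Fin r) : ℝ :=
  sSup {x : ℝ | ∃ σ : OmegaE G (d + 1) ET μ,
    x = relaxTime (unif (OmegaE G (d + 1) (blocks i) σ.1)) (treeGen G (d + 1) (blocks i) σ.1)}

/-- Restriction of a colouring in `Ω^μ_E` to `F = {e_1, …, e_r}` (the distinguished edges). -/
noncomputable def resE (d : ℕ) (ET : Finset (Sym2 V)) (μ : Sym2 V → Fin (d + 1))
    {r : ℕ} (roots : Fin r → Sym2 V) (σ : OmegaE G (d + 1) ET μ) : Fin r → Fin (d + 1) :=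
  fun i => σ.1 (roots i)

/-- The projection `π_𝓡` onto `F` of the uniform distribution on `Ω^μ_E`. -/
noncomputable def piRE (d : ℕ) (ET : Finset (Sym2 V)) (μ : Sym2 V → Fin (d + 1))
    {r : ℕ} (roots : Fin r → Sym2 V)
    (σh : ↥(Set.range (resE G d ET μ roots))) : ℝ :=
  (Fintype.card {σ : OmegaE G (d + 1) ET μ // resE G d ET μ roots σ = σh.1} : ℝ) /
  (Fintype.card (OmegaE G (d + 1) ET μ) : ℝ)

/-- `π^{i,σ̂}_proj(η̂)`: for an arbitrary extension `σ` of `σ̂`, the probability under the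
uniform distribution on `Ω^σ_{E_i}` that the restriction to `F` equals `η̂`. -/
noncomputable def projE (d : ℕ) (ET : Finset (Sym2 V)) (μ : Sym2 V → Fin (d + 1))
    {r : ℕ} (blocks : Fin r → Finset (Sym2 V)) (roots : Fin r → Sym2 V) (i : Fin r)
    (σh : ↥(Set.range (resE G d ET μ roots))) (ηh : Fin r → Fin (d + 1)) : ℝ :=
  (Fintype.card {ξ : OmegaE G (d + 1) (blocks i)
      (Classical.choose (Set.mem_range.mp σh.2)).1 //
      ∀ j : Fin r, ξ.1 (roots j) = ηh j} : ℝ) /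
  (Fintype.card (OmegaE G (d + 1) (blocks i)
      (Classical.choose (Set.mem_range.mp σh.2)).1) : ℝ)

/-- Off-diagonal entries of the reduced block dynamics `𝓡^μ_𝓔`. -/
noncomputable def redOffE (d : ℕ) (ET : Finset (Sym2 V)) (μ : Sym2 V → Fin (d + 1))
    {r : ℕ} (blocks : Fin r → Finset (Sym2 V)) (roots : Fin r → Sym2 V)
    (σh ηh : ↥(Set.range (resE G d ET μ roots))) : ℝ :=
  ∑ i : Fin r,
    if ∀ j : Fin r, j ≠ i → σh.1 j = ηh.1 j then
      blockGapE G d ET μ blocks i * projE G d ET μ blocks roots i σh ηh.1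
    else 0

/-- The reduced block dynamics `𝓡^μ_𝓔` on `Ω_𝓡 = {σ|_F : σ ∈ Ω^μ_E}`. -/
noncomputable def redDynE (d : ℕ) (ET : Finset (Sym2 V)) (μ : Sym2 V → Fin (d + 1))
    {r : ℕ} (blocks : Fin r → Finset (Sym2 V)) (roots : Fin r → Sym2 V) :
    ↥(Set.range (resE G d ET μ roots)) → ↥(Set.range (resE G d ET μ roots)) → ℝ :=
  fun σh ηh =>
    if σh = ηh then
      -∑ ηh' ∈ Finset.univ.filter fun b => b ≠ σh, redOffE G d ET μ blocks roots σh ηh'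
    else redOffE G d ET μ blocks roots σh ηh

end TreeBlocks

/-! ### Switching colours in a graph -/

section Switching

variable {X C : Type*}

/-- Proper vertex colourings, as plain functions: in this form they can be pinned pointwise. -/
def IsProperColouring (H : SimpleGraph X) (σ : X → C) : Prop :=
  ∀ ⦃f g⦄, H.Adj f g → σ f ≠ σ g

/-- The colouring that results from `σ` when the colours on `A` are permuted by `π`. -/
noncomputable def recolour (A : Set X) (π : Equiv.Perm C) (σ : X → C) : X → C :=
  A.piecewise (π ∘ σ) σ

/-- `A` contains `e`, and all edges of `H` that leave `A` end at neighbours of `e` in `Z`. In a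
proper colouring the colour of `e` can then be changed to any colour not used on these neighbours,
by exchanging the two colours on `A`. -/
structure IsSwitch (H : SimpleGraph X) (e : X) (A Z : Set X) : Prop where
  mem : e ∈ A
  mem_of_adj : ∀ ⦃f⦄, f ∈ A → ∀ ⦃g⦄, g ∉ A → H.Adj f g → g ∈ Z ∧ H.Adj e g

variable {H : SimpleGraph X} {A E Z : Set X} {e f h : X} {c : C} {μ ν σ : X → C}
  {π : Equiv.Perm C}

lemma recolour_of_mem (hf : f ∈ A) : recolour A π σ f = π (σ f) :=
  Set.piecewise_eq_of_mem A _ _ hf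

lemma recolour_of_notMem (hf : f ∉ A) : recolour A π σ f = σ f :=
  Set.piecewise_eq_of_notMem A _ _ hf

lemma recolour_injective (A : Set X) (π : Equiv.Perm C) :
    Function.Injective (recolour A π) := by
  intro σ τ hστ
  funext f
  have hf := congrFun hστ f
  by_cases hfA : f ∈ A
  · exact π.injective (by simpa only [recolour_of_mem hfA] using hf)
  · simpa only [recolour_of_notMem hfA] using hf

lemma IsProperColouring.recolour (hσ : IsProperColouring H σ)
    (hA : ∀ f ∈ A, ∀ g ∉ A, H.Adj f g → π (σ g) = σ g) :
    IsProperColouring H (recolour A π σ) := by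
  have hcross : ∀ f ∈ A, ∀ g ∉ A, H.Adj f g → π (σ f) ≠ σ g := fun f hf g hg hfg hπ =>
    hσ hfg (π.injective (hπ.trans (hA f hf g hg hfg).symm))
  intro f g hfg
  by_cases hf : f ∈ A <;> by_cases hg : g ∈ A <;>
    simp only [recolour_of_mem, recolour_of_notMem, hf, hg, not_false_eq_true]
  · exact π.injective.ne (hσ hfg)
  · exact hcross f hf g hg hfg
  · exact (hcross g hg f hf hfg.symm).symm
  · exact hσ hfg

lemma IsSwitch.isProperColouring_recolour (hA : IsSwitch H e A Z) (hσ : IsProperColouring H σ)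
    (hc : ∀ z ∈ Z, H.Adj e z → σ z ≠ c) :
    IsProperColouring H (recolour A (Equiv.swap (σ e) c) σ) := by
  refine hσ.recolour fun f hf g hg hfg => ?_
  obtain ⟨hgZ, heg⟩ := hA.mem_of_adj hf hg hfg
  exact Equiv.swap_apply_of_ne_of_ne (hσ heg).symm (hc g hgZ heg)

variable [Fintype X] [DecidableEq X] [Fintype C]

/-- The proper colourings of `H` that agree with the boundary condition `μ` outside of `E`. -/
noncomputable def extensions (H : SimpleGraph X) (E : Set X) (μ : X → C) : Finset (X → C) :=
  univ.filter fun σ => IsProperColouring H σ ∧ ∀ e ∉ E, σ e = μ e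

lemma mem_extensions :
    σ ∈ extensions H E μ ↔ IsProperColouring H σ ∧ ∀ e ∉ E, σ e = μ e := by
  simp only [extensions, mem_filter, mem_univ, true_and]

lemma extensions_congr (hμν : ∀ e ∉ E, μ e = ν e) : extensions H E μ = extensions H E ν := by
  ext σ
  simp only [mem_extensions]
  exact and_congr_right fun _ => forall₂_congr fun e he => by rw [hμν e he]

lemma IsSwitch.card_le_card_extensions_update (hA : IsSwitch H e A Z) (hAE : A ⊆ insert e E)
    (he : e ∉ E) {S : Finset (X → C)} (hS : S ⊆ extensions H E μ)
    (hc : ∀ σ ∈ S, ∀ z ∈ Z, H.Adj e z → σ z ≠ c) :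
    #S ≤ #(extensions H E (Function.update μ e c)) := by
  refine card_le_card_of_injOn (recolour A (Equiv.swap (μ e) c)) (fun σ hσS => ?_)
    (recolour_injective A _).injOn
  obtain ⟨hσ, hσμ⟩ := mem_extensions.mp (hS hσS)
  refine mem_extensions.mpr ⟨?_, fun f hf => ?_⟩
  · rw [← hσμ e he]
    exact hA.isProperColouring_recolour hσ (hc σ hσS)
  · by_cases hfe : f = e
    · rw [hfe, recolour_of_mem hA.mem, hσμ e he, Equiv.swap_apply_left, Function.update_self]
    · have hfA : f ∉ A := fun hfA => (hAE hfA).elim hfe hf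
      rw [recolour_of_notMem hfA, hσμ f hf, Function.update_of_ne hfe]

/-- Each colouring with colour `c` at `h` can be switched to all colours not used on `Z`, and can
be recovered from the new colour of `h` and the result. -/
lemma IsSwitch.card_filter_eq_mul_le {D : Set X} {Z : Finset X} (hD : IsSwitch H h D Z)
    (hDE : D ⊆ E) :
    #((extensions H E μ).filter fun σ => σ h = c) * (Fintype.card C - (#Z + 1)) ≤
      #((extensions H E μ).filter fun σ => σ h ≠ c) := by
  have hcard (σ : X → C) : Fintype.card C - (#Z + 1) ≤ #(insert c (Z.image σ))ᶜ := by
    rw [card_compl]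
    exact Nat.sub_le_sub_left ((card_insert_le c _).trans (by gcongr; exact card_image_le)) _
  calc #((extensions H E μ).filter fun σ => σ h = c) * (Fintype.card C - (#Z + 1))
      ≤ #(((extensions H E μ).filter fun σ => σ h = c).sigma
          fun σ => (insert c (Z.image σ))ᶜ) := by
        rw [card_sigma, ← smul_eq_mul]
        exact card_nsmul_le_sum _ _ _ fun σ _ => hcard σ
    _ ≤ #((extensions H E μ).filter fun σ => σ h ≠ c) := by
        refine card_le_card_of_injOn (fun p => recolour D (Equiv.swap c p.2) p.1) ?_ ?_
        · rintro ⟨σ, c'⟩ hp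
          simp only [coe_sigma, Set.mem_sigma_iff, mem_coe, mem_filter, mem_extensions, mem_compl,
            mem_insert, mem_image, not_or, not_exists, not_and] at hp ⊢
          obtain ⟨⟨⟨hσ, hσμ⟩, rfl⟩, hc', hc'Z⟩ := hp
          refine ⟨⟨hD.isProperColouring_recolour hσ fun z hz _ => hc'Z z hz, fun f hf => ?_⟩, ?_⟩
          · rw [recolour_of_notMem fun hfD => hf (hDE hfD), hσμ f hf]
          · rwa [recolour_of_mem hD.mem, Equiv.swap_apply_left]
        · rintro ⟨σ, c₁⟩ hσ ⟨τ, c₂⟩ hτ (hστ : recolour D _ σ = recolour D _ τ)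
          simp only [coe_sigma, Set.mem_sigma_iff, mem_coe, mem_filter] at hσ hτ
          obtain rfl : c₁ = c₂ := by
            have hh := congrFun hστ h
            rwa [recolour_of_mem hD.mem, recolour_of_mem hD.mem, hσ.1.2, hτ.1.2,
              Equiv.swap_apply_left, Equiv.swap_apply_left] at hh
          rw [recolour_injective D _ hστ]

/-- If switching the colour of `e` is only obstructed by the colour of `h`, which can be switched
itself subject to obstructions at the vertices of `Z`, then changing the boundary condition at `e`
loses at most a factor `(k - #Z) / (k - #Z - 1)`, for `k` colours. -/
lemma card_extensions_le_update_of_isSwitch_insert {D : Set X} {Z : Finset X}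
    (hA : IsSwitch H e A (insert h Eᶜ)) (hAE : A ⊆ insert e E)
    (hD : IsSwitch H h D Z) (hDE : D ⊆ E) (he : e ∉ E) (hZ : #Z + 1 < Fintype.card C)
    (hc : ∀ z ∉ E, H.Adj e z → μ z ≠ c) :
    (#(extensions H E μ) : ℝ) ≤ (Fintype.card C - #Z) / (Fintype.card C - #Z - 1) *
      #(extensions H E (Function.update μ e c)) := by
  set m : ℕ := Fintype.card C - (#Z + 1)
  have hk : Fintype.card C = m + (#Z + 1) := by omega
  have hm : 0 < m := by omega
  have hgood : #((extensions H E μ).filter fun σ => σ h ≠ c) ≤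
      #(extensions H E (Function.update μ e c)) := by
    refine hA.card_le_card_extensions_update hAE he (filter_subset _ _) fun σ hσ z hz hez => ?_
    obtain ⟨hσ, hσh⟩ := mem_filter.mp hσ
    rcases hz with rfl | hzE
    · exact hσh
    · rw [(mem_extensions.mp hσ).2 z hzE]
      exact hc z hzE hez
  have hbad := hD.card_filter_eq_mul_le hDE (μ := μ) (c := c)
  have hsplit := card_filter_add_card_filter_not (s := extensions H E μ) fun σ => σ h = c
  have hmul : #(extensions H E μ) * m ≤ (m + 1) * #(extensions H E (Function.update μ e c)) := by
    rw [← hsplit]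
    linarith [Nat.mul_le_mul_left (m + 1) hgood]
  have hK : ((Fintype.card C : ℝ) - #Z) / (Fintype.card C - #Z - 1) = (m + 1) / m := by
    rw [hk]
    push_cast
    congr 1 <;> ring
  rw [hK, div_mul_eq_mul_div, le_div_iff₀ (by exact_mod_cast hm)]
  exact_mod_cast hmul

/-- The boundary condition is changed from `μ` to `ν` at one vertex of `F` at a time. As `F` is
independent, no conflicts arise on the boundary in between. -/
theorem card_extensions_le_prod_mul {F : Finset X} (hF : H.IsIndepSet F) (w : X → ℝ)
    (hw : ∀ e ∈ F, 0 ≤ w e)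
    (hstep : ∀ e ∈ F, ∀ (ρ : X → C) (c : C), (∀ z ∉ E, H.Adj e z → ρ z ≠ c) →
      (#(extensions H E ρ) : ℝ) ≤ w e * #(extensions H E (Function.update ρ e c)))
    (hν : IsProperColouring H ν) (hμν : ∀ e ∉ E, e ∉ F → μ e = ν e) :
    (#(extensions H E μ) : ℝ) ≤ (∏ e ∈ F, w e) * #(extensions H E ν) := by
  have hind : ∀ T ⊆ F, (#(extensions H E μ) : ℝ) ≤
      (∏ e ∈ T, w e) * #(extensions H E (T.piecewise ν μ)) := by
    intro T
    induction T using Finset.induction_on with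
    | empty => simp
    | insert e T he ih =>
      intro hT
      obtain ⟨heF, hTF⟩ := insert_subset_iff.mp hT
      have hadm : ∀ z ∉ E, H.Adj e z → T.piecewise ν μ z ≠ ν e := by
        intro z hzE hez
        have hzF : z ∉ F := fun hzF => hF heF hzF hez.ne hez
        rw [piecewise_eq_of_notMem _ _ _ fun hzT => hzF (hTF hzT), hμν z hzE hzF]
        exact (hν hez).symm
      rw [prod_insert he, mul_comm (w e), mul_assoc, piecewise_insert]
      exact (ih hTF).trans (mul_le_mul_of_nonneg_left (hstep e heF _ _ hadm)
        (prod_nonneg fun x hx => hw x (hTF hx)))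
  have hfinal : extensions H E (F.piecewise ν μ) = extensions H E ν :=
    extensions_congr fun e he => by
      by_cases heF : e ∈ F
      · exact piecewise_eq_of_mem _ _ _ heF
      · rw [piecewise_eq_of_notMem _ _ _ heF, hμν e he heF]
  exact hfinal ▸ hind F Subset.rfl

end Switching

/-! ### Sides of an edge of a forest -/

section EdgeSide

variable {V : Type*} {G : SimpleGraph V}

/-- The edges, other than `q`, that are joined to the vertex `u` in `G` without `q`. For an edge
`q = s(u, w)` of a forest, these are the edges on the side of `u`. -/
def edgeSide (G : SimpleGraph V) (q : Sym2 V) (u : V) : Set (Sym2 V) :=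
  {f | f ∈ G.edgeSet ∧ f ≠ q ∧ ∀ v ∈ f, (G.deleteEdges {q}).Reachable u v}

variable {f g q : Sym2 V} {u v w x : V}

lemma mem_edgeSide_of_reachable (hf : f ∈ G.edgeSet) (hfq : f ≠ q) (hv : v ∈ f)
    (huv : (G.deleteEdges {q}).Reachable u v) : f ∈ edgeSide G q u := by
  refine ⟨hf, hfq, fun v' hv' => ?_⟩
  by_cases hvv' : v = v'
  · exact hvv' ▸ huv
  · obtain rfl := (Sym2.mem_and_mem_iff hvv').mp ⟨hv, hv'⟩
    exact huv.trans (SimpleGraph.deleteEdges_adj.mpr ⟨hf, hfq⟩).reachable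

lemma mem_edgeSide_of_mem (hf : f ∈ G.edgeSet) (hfq : f ≠ q) (hu : u ∈ f) : f ∈ edgeSide G q u :=
  mem_edgeSide_of_reachable hf hfq hu .rfl

lemma mem_edgeSide_of_mem_of_mem (hf : f ∈ edgeSide G q u) (hvf : v ∈ f) (hvg : v ∈ g)
    (hg : g ∈ G.edgeSet) (hgq : g ≠ q) : g ∈ edgeSide G q u :=
  mem_edgeSide_of_reachable hg hgq hvg (hf.2.2 v hvf)

lemma not_reachable_deleteEdges (hG : G.IsAcyclic) (huw : G.Adj u w) :
    ¬ (G.deleteEdges {s(u, w)}).Reachable u w :=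
  SimpleGraph.isBridge_iff.mp (SimpleGraph.isAcyclic_iff_forall_adj_isBridge.mp hG huw)

lemma disjoint_edgeSide (hG : G.IsAcyclic) (huw : G.Adj u w) :
    Disjoint (edgeSide G s(u, w) u) (edgeSide G s(u, w) w) := by
  refine Set.disjoint_left.mpr fun f hu hw => not_reachable_deleteEdges hG huw ?_
  exact (hu.2.2 _ f.out_fst_mem).trans (hw.2.2 _ f.out_fst_mem).symm

/-- The vertex `x'` is the second one on a path from `x` to `g`. -/
lemma exists_adj_mem_edgeSide {G' : SimpleGraph V} (hG' : G' ≤ G) (hg : g ∈ G.edgeSet)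
    (hxg : x ∉ g) (hvg : v ∈ g) (hxv : G'.Reachable x v) :
    ∃ x', G'.Adj x x' ∧ g ∈ edgeSide G s(x, x') x' := by
  obtain ⟨p, hp⟩ := hxv.exists_isPath
  cases p with
  | nil => exact absurd hvg hxg
  | @cons _ x' _ hadj p =>
    have hnotMem : s(x, x') ∉ (p.mapLe hG').edges := by
      rw [SimpleGraph.Walk.edges_mapLe_eq_edges]
      exact ((SimpleGraph.Walk.isTrail_cons hadj p).mp hp.isTrail).2
    exact ⟨x', hadj, mem_edgeSide_of_reachable hg (fun hgx => hxg (hgx ▸ Sym2.mem_mk_left x x'))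
      hvg ((p.mapLe hG').toDeleteEdge _ hnotMem).reachable⟩

/-- If `g` is not at `w`, then `q` is the second edge on the path from `w` to `g`. -/
lemma exists_mem_notMem_edgeSide (hG : G.IsAcyclic) (hg : g ∈ edgeSide G s(u, w) w) :
    ∃ q ∈ G.edgeSet, w ∈ q ∧ q ≠ s(u, w) ∧ g ∉ edgeSide G q w := by
  by_cases hwg : w ∈ g
  · exact ⟨g, hg.1, hwg, hg.2.1, fun hgg => hgg.2.1 rfl⟩
  · obtain ⟨w', hww', hgw'⟩ := exists_adj_mem_edgeSide (G.deleteEdges_le _) hg.1 hwg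
      g.out_fst_mem (hg.2.2 _ g.out_fst_mem)
    obtain ⟨hadj, hne⟩ := SimpleGraph.deleteEdges_adj.mp hww'
    exact ⟨s(w, w'), hadj, Sym2.mem_mk_left w w', hne,
      fun hgw => Set.disjoint_left.mp (disjoint_edgeSide hG hadj) hgw hgw'⟩

end EdgeSide

/-! ### Blocks hanging from the root edges -/

section HangBlock

variable {V : Type} {G : SimpleGraph V} {ET : Finset (Sym2 V)} {R : Finset V} {e f g : Sym2 V}
  {v : V}

lemma EdgeInc.symm (hef : EdgeInc e f) : EdgeInc f e :=
  ⟨hef.1.symm, hef.2.imp fun _ => And.symm⟩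

/-- The edges of `ET` at the root vertices, that is, the set `F` of the edges from which the blocks
hang. -/
noncomputable def rootEdges (ET : Finset (Sym2 V)) (R : Finset V) : Finset (Sym2 V) :=
  ET.filter fun e => ∃ v ∈ R, v ∈ e

lemma mem_rootEdges : e ∈ rootEdges ET R ↔ e ∈ ET ∧ ∃ v ∈ R, v ∈ e := mem_filter

/-- The edges of `ET` whose colours remain free when the root edges are coloured. -/
def freeEdges (ET : Finset (Sym2 V)) (R : Finset V) : Set (Sym2 V) :=
  (ET : Set (Sym2 V)) \ rootEdges ET R

/-- The line graph of `G` without the edges inside `F`. If the colours on `F` are prescribed and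
distinct where necessary, its proper vertex colourings are the proper edge colourings of `G`, but
the prescribed colours can be changed one at a time without conflicts among them. -/
def conflictGraph (G : SimpleGraph V) (F : Finset (Sym2 V)) : SimpleGraph (Sym2 V) where
  Adj e f := e ∈ G.edgeSet ∧ f ∈ G.edgeSet ∧ EdgeInc e f ∧ ¬ (e ∈ F ∧ f ∈ F)
  symm := ⟨fun _ _ ⟨he, hf, hef, hF⟩ => ⟨hf, he, hef.symm, fun hfe => hF hfe.symm⟩⟩
  loopless := ⟨fun _ ⟨_, _, hee, _⟩ => hee.1 rfl⟩

lemma isIndepSet_conflictGraph (F : Finset (Sym2 V)) : (conflictGraph G F).IsIndepSet F :=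
  fun _ he _ hf _ hef => hef.2.2.2 ⟨he, hf⟩

/-- A set of root vertices of the subtree `ET`: one internal vertex, or the two endpoints of an
edge with internal endpoints, in the two kinds of block partitions. -/
structure IsRootSet (G : SimpleGraph V) [DecidableEq V] (ET : Finset (Sym2 V)) (R : Finset V) :
    Prop where
  subset_edgeSet : (ET : Set (Sym2 V)) ⊆ G.edgeSet
  preconnected : (G.induce (R : Set V)).Preconnected
  two_le_degT : ∀ v ∈ R, 2 ≤ degT ET v

lemma hangBlock_subset : hangBlock ET R e ⊆ ET := filter_subset _ _

lemma self_mem_hangBlock (he : e ∈ ET) : e ∈ hangBlock ET R e := mem_filter.mpr ⟨he, .refl⟩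

lemma mem_hangBlock_of_mem (hf : f ∈ hangBlock ET R e) (hg : g ∈ ET) (hvf : v ∈ f) (hvg : v ∈ g)
    (hv : v ∉ R) : g ∈ hangBlock ET R e := by
  by_cases hfg : f = g
  · exact hfg ▸ hf
  · obtain ⟨hfT, hef⟩ := mem_filter.mp hf
    exact mem_filter.mpr ⟨hg, hef.tail ⟨hfT, hg, ⟨hfg, v, hvf, hvg⟩, v, hvf, hvg, hv⟩⟩

lemma hangBlock_induction {P : Sym2 V → Prop} (he : P e)
    (step : ∀ f g, f ∈ hangBlock ET R e → g ∈ hangBlock ET R e → P f →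
      ∀ v ∈ f, v ∈ g → v ∉ R → P g) :
    ∀ f ∈ hangBlock ET R e, P f := by
  intro f hf
  induction (mem_filter.mp hf).2 with
  | refl => exact he
  | tail hef hfg ih =>
    obtain ⟨hfT, hgT, -, v, hvf, hvg, hv⟩ := hfg
    have hfB := mem_filter.mpr ⟨hfT, hef⟩
    exact step _ _ hfB (mem_hangBlock_of_mem hfB hgT hvf hvg hv) (ih hfB) v hvf hvg hv

lemma mem_hangBlock_symm (he : e ∈ ET) (hf : f ∈ hangBlock ET R e) : e ∈ hangBlock ET R f := by
  refine mem_filter.mpr ⟨he, ?_⟩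
  refine hangBlock_induction (P := fun g => Relation.ReflTransGen _ g e) .refl ?_ f hf
  intro f g hf hg hfe v hvf hvg hv
  by_cases hgf : g = f
  · exact hgf ▸ hfe
  · exact hfe.head
      ⟨hangBlock_subset hg, hangBlock_subset hf, ⟨hgf, v, hvg, hvf⟩, v, hvg, hvf, hv⟩

lemma mem_hangBlock_trans (hf : f ∈ hangBlock ET R e) (hg : g ∈ hangBlock ET R f) :
    g ∈ hangBlock ET R e :=
  hangBlock_induction hf (fun _ _ _ hg' hf' _ hvf hvg hv =>
    mem_hangBlock_of_mem hf' (hangBlock_subset hg') hvf hvg hv) g hg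

lemma hangBlock_eq_singleton (he : e ∈ ET) (heR : ∀ v ∈ e, v ∈ R) : hangBlock ET R e = {e} := by
  refine Subset.antisymm (fun f hf => mem_singleton.mpr ?_)
    (singleton_subset_iff.mpr (self_mem_hangBlock he))
  refine hangBlock_induction (P := (· = e)) rfl ?_ f hf
  rintro f g - - rfl v hvf - hv
  exact absurd (heR v hvf) hv

lemma hangBlock_erase [DecidableEq V] (heR : ∀ v ∈ e, v ∈ R) (hf : f ∈ ET) (hfe : f ≠ e) :
    hangBlock (ET.erase e) R f = hangBlock ET R f := by
  have hself : f ∈ hangBlock (ET.erase e) R f := self_mem_hangBlock (mem_erase.mpr ⟨hfe, hf⟩)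
  refine Subset.antisymm ?_ ?_
  · exact hangBlock_induction (self_mem_hangBlock hf) fun g g' _ hg' hg v hvg hvg' hv =>
      mem_hangBlock_of_mem hg (mem_of_mem_erase (hangBlock_subset hg')) hvg hvg' hv
  · refine hangBlock_induction hself fun g g' _ hg' hg v hvg hvg' hv =>
      mem_hangBlock_of_mem hg (mem_erase.mpr ⟨?_, hangBlock_subset hg'⟩) hvg hvg' hv
    exact fun hg'e => hv (heR v (hg'e ▸ hvg'))

lemma notMem_of_adj_hangBlock (hf : f ∈ hangBlock ET R e) (hg : g ∉ hangBlock ET R e)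
    (hfg : (conflictGraph G (rootEdges ET R)).Adj f g) : g ∉ ET := by
  intro hgT
  obtain ⟨-, -, ⟨-, v, hvf, hvg⟩, hF⟩ := hfg
  by_cases hv : v ∈ R
  · exact hF ⟨mem_rootEdges.mpr ⟨hangBlock_subset hf, v, hv, hvf⟩,
      mem_rootEdges.mpr ⟨hgT, v, hv, hvg⟩⟩
  · exact hg (mem_hangBlock_of_mem hf hgT hvf hvg hv)

variable [DecidableEq V] {r x : V}

lemma hangBlock_subset_insert_edgeSide (hR : IsRootSet G ET R) (hr : r ∈ R) :
    (hangBlock ET R s(r, x) : Set (Sym2 V)) ⊆ insert s(r, x) (edgeSide G s(r, x) x) := by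
  refine hangBlock_induction (Set.mem_insert _ _) fun f g _ hg hf v hvf hvg hv => ?_
  refine (eq_or_ne g s(r, x)).imp_right fun hgq => ?_
  have hgG := hR.subset_edgeSet (hangBlock_subset hg)
  rcases hf with rfl | hf
  · rcases Sym2.mem_iff.mp hvf with rfl | rfl
    · exact absurd hr hv
    · exact mem_edgeSide_of_mem hgG hgq hvg
  · exact mem_edgeSide_of_mem_of_mem hf hvf hvg hgG hgq

lemma IsRootSet.reachable_deleteEdges (hR : IsRootSet G ET R) (hr : r ∈ R) (hx : x ∉ R)
    (hv : v ∈ R) : (G.deleteEdges {s(r, x)}).Reachable r v := by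
  have hhom : ∀ a b : (R : Set V), (G.induce (R : Set V)).Adj a b →
      (G.deleteEdges {s(r, x)}).Adj a b := by
    refine fun a b hab => SimpleGraph.deleteEdges_adj.mpr ⟨hab, fun hq => ?_⟩
    have hxab : x ∈ s((a : V), (b : V)) := (Set.mem_singleton_iff.mp hq) ▸ Sym2.mem_mk_right r x
    rcases Sym2.mem_iff.mp hxab with rfl | rfl
    exacts [hx a.2, hx b.2]
  exact (hR.preconnected ⟨r, hr⟩ ⟨v, hv⟩).map (⟨Subtype.val, hhom _ _⟩ : _ →g _)

lemma eq_of_mem_hangBlock_of_mem_rootEdges (hG : G.IsAcyclic) (hR : IsRootSet G ET R)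
    (he : e ∈ rootEdges ET R) (hf : f ∈ rootEdges ET R) (hfe : f ∈ hangBlock ET R e) : f = e := by
  obtain ⟨heT, r, hr, x, rfl⟩ := mem_rootEdges.mp he
  obtain ⟨-, v, hv, hvf⟩ := mem_rootEdges.mp hf
  by_cases hx : x ∈ R
  · have heR : ∀ v ∈ s(r, x), v ∈ R := fun v hv => by
      rcases Sym2.mem_iff.mp hv with rfl | rfl <;> assumption
    exact mem_singleton.mp (hangBlock_eq_singleton heT heR ▸ hfe)
  · refine (hangBlock_subset_insert_edgeSide hR hr hfe).resolve_right fun hside => ?_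
    exact not_reachable_deleteEdges hG (hR.subset_edgeSet heT)
      ((hR.reachable_deleteEdges hr hx hv).trans (hside.2.2 v hvf).symm)

lemma pairwiseDisjoint_hangBlock (hG : G.IsAcyclic) (hR : IsRootSet G ET R) :
    (rootEdges ET R : Set (Sym2 V)).PairwiseDisjoint (hangBlock ET R) := by
  refine fun e he f hf hef => disjoint_left.mpr fun g hge hgf => hef.symm ?_
  exact eq_of_mem_hangBlock_of_mem_rootEdges hG hR he hf
    (mem_hangBlock_trans hge (mem_hangBlock_symm (mem_rootEdges.mp hf).1 hgf))

lemma hangBlock_sdiff_singleton_subset (hG : G.IsAcyclic) (hR : IsRootSet G ET R)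
    (he : e ∈ rootEdges ET R) :
    (hangBlock ET R e : Set (Sym2 V)) \ {e} ⊆ freeEdges ET R :=
  fun _ hf => ⟨hangBlock_subset hf.1, fun hfF =>
    hf.2 (eq_of_mem_hangBlock_of_mem_rootEdges hG hR he hfF hf.1)⟩

lemma exists_adj_mem_hangBlock (hG : G.IsAcyclic) (hR : IsRootSet G ET R) (hr : r ∈ R)
    (he : s(r, x) ∈ ET) (hf : f ∈ hangBlock ET R s(r, x)) (hxf : x ∉ f) :
    ∃ x', s(x, x') ∈ hangBlock ET R s(r, x) ∧ s(x, x') ≠ s(r, x) ∧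
      f ∈ edgeSide G s(x, x') x' := by
  have hfe : f ≠ s(r, x) := fun hfe => hxf (hfe ▸ Sym2.mem_mk_right r x)
  have hfx := (hangBlock_subset_insert_edgeSide hR hr hf).resolve_left hfe
  obtain ⟨x', hxx', hfx'⟩ := exists_adj_mem_edgeSide (G.deleteEdges_le _) hfx.1 hxf
    f.out_fst_mem (hfx.2.2 _ f.out_fst_mem)
  obtain ⟨hadj, hne⟩ := SimpleGraph.deleteEdges_adj.mp hxx'
  refine ⟨x', by_contra fun hh => ?_, hne, hfx'⟩
  have hBx : ∀ g ∈ hangBlock ET R s(r, x), g ∈ edgeSide G s(x, x') x := by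
    refine hangBlock_induction ?_ fun g g' _ hg' hg v hvg hvg' _ => ?_
    · exact mem_edgeSide_of_mem (hR.subset_edgeSet he) (Ne.symm hne) (Sym2.mem_mk_right r x)
    · exact mem_edgeSide_of_mem_of_mem hg hvg hvg' (hR.subset_edgeSet (hangBlock_subset hg'))
        fun hg'h => hh (hg'h ▸ hg')
  exact Set.disjoint_left.mp (disjoint_edgeSide hG hadj) (hBx f hf) hfx'

end HangBlock

/-! ### Switching on a block -/

section BlockSwitch

lemma one_le_sub_two_div_sub_three {k : ℝ} (hk : 3 < k) : 1 ≤ (k - 2) / (k - 3) := by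
  rw [one_le_div₀ (by linarith)]
  linarith

variable {V : Type} {G : SimpleGraph V} {F : Finset (Sym2 V)} {B E : Set (Sym2 V)}
  {b e f g h q : Sym2 V} {u x x' : V}

lemma eq_of_adj_of_notMem_edgeSide (hf : f ∈ edgeSide G q u) (hg : g ∉ edgeSide G q u)
    (hfg : (conflictGraph G F).Adj f g) : g = q := by
  obtain ⟨-, hgG, ⟨-, v, hvf, hvg⟩, -⟩ := hfg
  exact by_contra fun hgq => hg (mem_edgeSide_of_mem_of_mem hf hvf hvg hgG hgq)

lemma isSwitch_inter_edgeSide (hG : G.IsAcyclic)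
    (hexit : ∀ f ∈ B, ∀ g ∉ B, (conflictGraph G F).Adj f g → g ∉ E ∧ (f = e ∨ f = b))
    (he : e ∈ B) (heG : e ∈ G.edgeSet) (hxe : x ∈ e) (hxx' : G.Adj x x') (hhF : s(x, x') ∉ F)
    (hhe : s(x, x') ≠ e) (hb : b ∈ edgeSide G s(x, x') x') :
    IsSwitch (conflictGraph G F) e (B ∩ edgeSide G s(x, x') x) (insert s(x, x') Eᶜ) where
  mem := ⟨he, mem_edgeSide_of_mem heG hhe.symm hxe⟩
  mem_of_adj := by
    rintro f ⟨hfB, hfx⟩ g hg hfg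
    by_cases hgB : g ∈ B
    · obtain rfl := eq_of_adj_of_notMem_edgeSide hfx (fun hgx => hg ⟨hgB, hgx⟩) hfg
      exact ⟨Set.mem_insert _ _, heG, hxx',
        ⟨hhe.symm, x, hxe, Sym2.mem_mk_left x x'⟩, fun hF => hhF hF.2⟩
    · obtain ⟨hgE, rfl | rfl⟩ := hexit f hfB g hgB hfg
      · exact ⟨.inr hgE, hfg⟩
      · exact absurd hb (Set.disjoint_left.mp (disjoint_edgeSide hG hxx') hfx)

lemma isSwitch_inter_edgeSide_sdiff_singleton
    (hexit : ∀ f ∈ B, ∀ g ∉ B, (conflictGraph G F).Adj f g → f = e ∨ f = b)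
    (hhB : h ∈ B) (hhG : h ∈ G.edgeSet) (hhF : h ∉ F) (heG : e ∈ G.edgeSet) (hhe : EdgeInc h e)
    (hqG : q ∈ G.edgeSet) (hhq : h ≠ q) (huh : u ∈ h) (huq : u ∈ q) (hb : b ∉ edgeSide G q u) :
    IsSwitch (conflictGraph G F) h ((B ∩ edgeSide G q u) \ {e}) {e, q} where
  mem := ⟨⟨hhB, mem_edgeSide_of_mem hhG hhq huh⟩, hhe.1⟩
  mem_of_adj := by
    rintro f ⟨⟨hfB, hfu⟩, hfe⟩ g hg hfg
    by_cases hge : g = e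
    · subst hge
      exact ⟨.inl rfl, hhG, heG, hhe, fun hF => hhF hF.1⟩
    by_cases hgB : g ∈ B
    · obtain rfl := eq_of_adj_of_notMem_edgeSide hfu (fun hgu => hg ⟨⟨hgB, hgu⟩, hge⟩) hfg
      exact ⟨.inr rfl, hhG, hqG, ⟨hhq, u, huh, huq⟩, fun hF => hhF hF.1⟩
    · rcases hexit f hfB g hgB hfg with rfl | rfl
      exacts [absurd rfl hfe, absurd hfu hb]

variable [Fintype V] [DecidableEq V] [DecidableRel G.Adj] {ET S : Finset (Sym2 V)} {R : Finset V}

lemma mem_intBd (hg : g ∈ G.edgeSet) (hgT : g ∉ ET) (hf : f ∈ ET) (hfg : EdgeInc f g) :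
    f ∈ intBd G ET := by
  refine mem_filter.mpr ⟨hf, g, mem_filter.mpr ⟨?_, f, hf, hfg.symm⟩, hfg⟩
  exact mem_sdiff.mpr ⟨SimpleGraph.mem_edgeFinset.mpr hg, hgT⟩

lemma mem_intBd_of_subset (hS : S ⊆ ET) (hfS : f ∈ S) (hf : f ∈ intBd G ET) : f ∈ intBd G S := by
  obtain ⟨-, g, hg, hfg⟩ := mem_filter.mp hf
  obtain ⟨hgG, hgT⟩ := mem_sdiff.mp (mem_filter.mp hg).1
  exact mem_intBd (SimpleGraph.mem_edgeFinset.mp hgG) (fun hgS => hgT (hS hgS)) hfS hfg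

lemma IsSplitting.card_intBd_le (hS : IsSplitting G S) : #(intBd G S) ≤ 2 := by
  rcases hS.2.2.2 with hone | ⟨-, hcard, -⟩
  · exact (card_le_card (filter_subset _ _)).trans (hone.le.trans one_le_two)
  · exact hcard

lemma IsSplitting.intBd_eq_pair (hS : IsSplitting G S) (he : e ∈ intBd G S) (hf : f ∈ intBd G S)
    (hfe : e ≠ f) : intBd G S = {e, f} :=
  (eq_of_subset_of_card_le (insert_subset he (singleton_subset_iff.mpr hf))
    (hS.card_intBd_le.trans (card_pair hfe).ge)).symm

lemma IsSplitting.not_edgeInc (hS : IsSplitting G S) (he : e ∈ intBd G S) (hf : f ∈ intBd G S)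
    (hef : e ≠ f) : ¬ EdgeInc e f := by
  rcases hS.2.2.2 with hone | ⟨-, -, hinc⟩
  · exact absurd (card_le_one.mp hone.le _ (mem_filter.mp he).1 _ (mem_filter.mp hf).1) hef
  · exact hinc e he f hf hef

lemma mem_intBd_hangBlock (hG : G.IsAcyclic) (hR : IsRootSet G ET R) (he : e ∈ rootEdges ET R) :
    e ∈ intBd G (hangBlock ET R e) := by
  obtain ⟨heT, r, hr, hre⟩ := mem_rootEdges.mp he
  obtain ⟨f, hf, hfe⟩ := exists_mem_ne (hR.two_le_degT r hr) e
  obtain ⟨hfT, hrf⟩ := mem_filter.mp hf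
  have hfF : f ∈ rootEdges ET R := mem_rootEdges.mpr ⟨hfT, r, hr, hrf⟩
  exact mem_intBd (hR.subset_edgeSet hfT)
    (fun hfB => hfe (eq_of_mem_hangBlock_of_mem_rootEdges hG hR he hfF hfB))
    (self_mem_hangBlock heT) ⟨hfe.symm, r, hre, hrf⟩

lemma mem_intBd_of_adj_hangBlock (hf : f ∈ hangBlock ET R e) (hg : g ∉ hangBlock ET R e)
    (hfg : (conflictGraph G (rootEdges ET R)).Adj f g) : f ∈ intBd G ET :=
  mem_intBd hfg.2.1 (notMem_of_adj_hangBlock hf hg hfg) (hangBlock_subset hf) hfg.2.2.1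

lemma IsSplitting.eq_or_eq_of_adj_hangBlock (hB : IsSplitting G (hangBlock ET R e))
    (he : e ∈ intBd G (hangBlock ET R e)) (hb : b ∈ intBd G (hangBlock ET R e)) (heb : e ≠ b)
    (hf : f ∈ hangBlock ET R e) (hg : g ∉ hangBlock ET R e)
    (hfg : (conflictGraph G (rootEdges ET R)).Adj f g) : f = e ∨ f = b := by
  have hfB := mem_intBd_of_subset hangBlock_subset hf (mem_intBd_of_adj_hangBlock hf hg hfg)
  simpa only [hB.intBd_eq_pair he hb heb, mem_insert, mem_singleton] using hfB

lemma isSwitch_hangBlock (he : e ∈ ET) (hB : ∀ f ∈ hangBlock ET R e, f ∈ intBd G ET → f = e) :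
    IsSwitch (conflictGraph G (rootEdges ET R)) e (hangBlock ET R e) (freeEdges ET R)ᶜ where
  mem := self_mem_hangBlock he
  mem_of_adj f hf g hg hfg := by
    obtain rfl := hB f hf (mem_intBd_of_adj_hangBlock hf hg hfg)
    exact ⟨fun hgE => notMem_of_adj_hangBlock hf hg hfg hgE.1, hfg⟩

/-- The splitting property makes `e` and `b` the only exits from the block and keeps them apart, so
the path from `e` to `b` continues with edges `h` and `q` after `e`. The switching sets are the
parts of the block before `h` and before `q`, respectively. -/
lemma exists_isSwitch_insert (hG : G.IsAcyclic) (hR : IsRootSet G ET R) (he : e ∈ rootEdges ET R)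
    (hB : IsSplitting G (hangBlock ET R e)) (hb : b ∈ hangBlock ET R e) (hbT : b ∈ intBd G ET)
    (heb : e ≠ b) :
    ∃ h q A D, e ≠ q ∧ A ⊆ insert e (freeEdges ET R) ∧ D ⊆ freeEdges ET R ∧
      IsSwitch (conflictGraph G (rootEdges ET R)) e A (insert h (freeEdges ET R)ᶜ) ∧
      IsSwitch (conflictGraph G (rootEdges ET R)) h D {e, q} := by
  have heB := mem_intBd_hangBlock hG hR he
  have hbB := mem_intBd_of_subset hangBlock_subset hb hbT
  have hsub := hangBlock_sdiff_singleton_subset hG hR he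
  obtain ⟨heT, r, hr, x, rfl⟩ := mem_rootEdges.mp he
  have hxe := Sym2.mem_mk_right r x
  have hxb : x ∉ b := fun hxb => hB.not_edgeInc heB hbB heb ⟨heb, x, hxe, hxb⟩
  obtain ⟨x', hhB, hhe, hbx'⟩ := exists_adj_mem_hangBlock hG hR hr heT hb hxb
  obtain ⟨q, hqG, hx'q, hqh, hbq⟩ := exists_mem_notMem_edgeSide hG hbx'
  have heG := hR.subset_edgeSet heT
  have hhG := hR.subset_edgeSet (hangBlock_subset hhB)
  have hhF := (hsub ⟨hhB, hhe⟩).2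
  have heq : s(r, x) ≠ q := by
    rintro rfl
    rcases Sym2.mem_iff.mp hx'q with rfl | rfl
    exacts [hhe Sym2.eq_swap, G.loopless.irrefl _ hhG]
  have hexit {f g : Sym2 V} (hf : f ∈ hangBlock ET R s(r, x)) :=
    hB.eq_or_eq_of_adj_hangBlock heB hbB heb (g := g) hf
  have hA := isSwitch_inter_edgeSide hG (E := freeEdges ET R) (fun f hf g hg hfg =>
    ⟨fun hgE => notMem_of_adj_hangBlock hf hg hfg hgE.1, hexit hf hg hfg⟩)
    (self_mem_hangBlock heT) heG hxe hhG hhF hhe hbx'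
  have hD := isSwitch_inter_edgeSide_sdiff_singleton (fun f hf g hg hfg => hexit hf hg hfg)
    hhB hhG hhF heG ⟨hhe, x, Sym2.mem_mk_left x x', hxe⟩
    hqG hqh.symm (Sym2.mem_mk_right x x') hx'q hbq
  refine ⟨s(x, x'), q, _, _, heq, ?_, ?_, hA, hD⟩
  · exact Set.inter_subset_left.trans (Set.sdiff_singleton_subset_iff.mp hsub)
  · exact (Set.sdiff_subset_sdiff_left Set.inter_subset_left).trans hsub

variable {C : Type*} [Fintype C] {μ ν : Sym2 V → C} {c : C}

lemma card_extensions_le_pow_mul_update (hG : G.IsAcyclic) (hR : IsRootSet G ET R)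
    (he : e ∈ rootEdges ET R) (hB : IsSplitting G (hangBlock ET R e)) (hC : 3 < Fintype.card C)
    (hc : ∀ z ∉ freeEdges ET R, (conflictGraph G (rootEdges ET R)).Adj e z → μ z ≠ c) :
    (#(extensions (conflictGraph G (rootEdges ET R)) (freeEdges ET R) μ) : ℝ) ≤
      ((Fintype.card C - 2) / (Fintype.card C - 3)) ^ #(hangBlock ET R e ∩ intBd G ET) *
        #(extensions (conflictGraph G (rootEdges ET R)) (freeEdges ET R)
          (Function.update μ e c)) := by
  have hK := one_le_sub_two_div_sub_three (k := Fintype.card C) (by exact_mod_cast hC)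
  have heE : e ∉ freeEdges ET R := fun heE => heE.2 he
  by_cases hfree : ∀ b ∈ hangBlock ET R e, b ∈ intBd G ET → b = e
  · refine le_trans ?_ (le_mul_of_one_le_left (Nat.cast_nonneg _) (one_le_pow₀ hK))
    refine Nat.cast_le.mpr ((isSwitch_hangBlock (mem_rootEdges.mp he).1
      hfree).card_le_card_extensions_update ?_ heE Subset.rfl fun σ hσ z hz hez => ?_)
    · exact Set.sdiff_singleton_subset_iff.mp (hangBlock_sdiff_singleton_subset hG hR he)
    · exact (mem_extensions.mp hσ).2 z hz ▸ hc z hz hez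
  · push Not at hfree
    obtain ⟨b, hb, hbT, hbe⟩ := hfree
    obtain ⟨h, q, A, D, heq, hAE, hDE, hA, hD⟩ :=
      exists_isSwitch_insert hG hR he hB hb hbT hbe.symm
    have hcard : #({e, q} : Finset (Sym2 V)) = 2 := card_pair heq
    have hle := card_extensions_le_update_of_isSwitch_insert (Z := {e, q}) hA hAE
      (by rwa [coe_pair]) hDE heE (by omega) hc
    refine hle.trans (mul_le_mul_of_nonneg_right ?_ (Nat.cast_nonneg _))
    have hpow := le_self_pow₀ hK (card_pos.mpr ⟨b, mem_inter.mpr ⟨hb, hbT⟩⟩).ne'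
    rwa [hcard, Nat.cast_ofNat, sub_sub, two_add_one_eq_three]

theorem card_extensions_le_sq_mul (hG : G.IsAcyclic) (hT : #(intBd G ET) ≤ 2)
    (hR : IsRootSet G ET R) (hB : ∀ e ∈ rootEdges ET R, IsSplitting G (hangBlock ET R e))
    (hC : 3 < Fintype.card C) (hν : IsProperColouring (conflictGraph G (rootEdges ET R)) ν)
    (hμν : ∀ f ∉ ET, μ f = ν f) :
    (#(extensions (conflictGraph G (rootEdges ET R)) (freeEdges ET R) μ) : ℝ) ≤
      ((Fintype.card C - 2) / (Fintype.card C - 3)) ^ 2 *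
        #(extensions (conflictGraph G (rootEdges ET R)) (freeEdges ET R) ν) := by
  have hK := one_le_sub_two_div_sub_three (k := Fintype.card C) (by exact_mod_cast hC)
  have hsum : ∑ e ∈ rootEdges ET R, #(hangBlock ET R e ∩ intBd G ET) ≤ 2 := by
    rw [← card_biUnion fun e he f hf hef => (pairwiseDisjoint_hangBlock hG hR he hf hef).mono
      inter_subset_left inter_subset_left]
    exact (card_le_card (biUnion_subset.mpr fun _ _ => inter_subset_right)).trans hT
  refine (card_extensions_le_prod_mul (isIndepSet_conflictGraph _) _
    (fun e _ => pow_nonneg (zero_le_one.trans hK) #(hangBlock ET R e ∩ intBd G ET))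
    (fun e he ρ c hc => card_extensions_le_pow_mul_update hG hR he (hB e he) hC hc) hν
    fun f hfE hfF => hμν f fun hf => hfE ⟨hf, hfF⟩).trans ?_
  rw [prod_pow_eq_pow_sum]
  exact mul_le_mul_of_nonneg_right (pow_le_pow_right₀ hK hsum) (Nat.cast_nonneg _)

end BlockSwitch

/-! ### Root sets of block partitions -/

section RootSet

variable {V : Type} [DecidableEq V] {G : SimpleGraph V} {ET : Finset (Sym2 V)} {r : ℕ}
  {blocks : Fin r → Finset (Sym2 V)} {roots : Fin r → Sym2 V}

lemma IsVertexRooted.exists_isRootSet (hroot : IsVertexRooted ET blocks roots)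
    (hE : (ET : Set (Sym2 V)) ⊆ G.edgeSet) :
    ∃ R, IsRootSet G ET R ∧ Set.range roots = rootEdges ET R ∧
      ∀ i, blocks i = hangBlock ET R (roots i) := by
  obtain ⟨r₀, hdeg, -, hmem, hsurj, hblocks⟩ := hroot
  refine ⟨{r₀}, ⟨hE, ?_, by simpa using hdeg⟩, ?_, hblocks⟩
  · rw [coe_singleton]
    exact .of_subsingleton
  · ext f
    simp only [Set.mem_range, mem_coe, mem_rootEdges, mem_singleton, exists_eq_left]
    exact ⟨fun ⟨i, hi⟩ => hi ▸ hmem i, fun hf => hsurj f hf.1 hf.2⟩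

lemma IsEdgeRooted.exists_isRootSet [Fintype V] [DecidableRel G.Adj]
    (hroot : IsEdgeRooted G ET blocks roots) (hE : (ET : Set (Sym2 V)) ⊆ G.edgeSet) :
    ∃ R, IsRootSet G ET R ∧ Set.range roots = rootEdges ET R ∧
      ∀ i, blocks i = hangBlock ET R (roots i) := by
  obtain ⟨e, heT, -, hdeg, hinj, ⟨i₀, hi₀, hblock₀⟩, hmem, hsurj⟩ := hroot
  have heR : ∀ v ∈ e, v ∈ univ.filter (· ∈ e) := fun v hv => mem_filter.mpr ⟨mem_univ v, hv⟩
  refine ⟨univ.filter (· ∈ e), ⟨hE, ?_, fun v hv => hdeg v (mem_filter.mp hv).2⟩, ?_, fun i => ?_⟩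
  · induction e with
    | h u v =>
      have huv : ((univ.filter (· ∈ s(u, v)) : Finset V) : Set V) = {u, v} := by
        ext w
        simp only [mem_coe, mem_filter, mem_univ, true_and, Sym2.mem_iff, Set.mem_insert_iff,
          Set.mem_singleton_iff]
      rw [huv]
      exact (SimpleGraph.induce_pair_connected_of_adj (hE heT)).preconnected
  · ext f
    simp only [Set.mem_range, mem_coe, mem_rootEdges, mem_filter, mem_univ, true_and]
    constructor
    · rintro ⟨i, rfl⟩
      rcases hmem i with hi | ⟨hiT, -, ⟨-, v, hve, hvi⟩, -⟩
      · exact ⟨hi ▸ heT, _, e.out_fst_mem, hi ▸ e.out_fst_mem⟩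
      · exact ⟨hiT, v, hve, hvi⟩
    · rintro ⟨hfT, v, hve, hvf⟩
      by_cases hfe : f = e
      · exact ⟨i₀, hi₀.trans hfe.symm⟩
      · exact hsurj f hfT hfe ⟨Ne.symm hfe, v, hve, hvf⟩
  · rcases hmem i with hi | ⟨hiT, hie, -, hi⟩
    · obtain rfl : i = i₀ := hinj (hi.trans hi₀.symm)
      rw [hblock₀, hi, hangBlock_eq_singleton heT heR]
    · rw [hi, hangBlock_erase heR hiT hie]

lemma TreeBlockSetting.exists_isRootSet [Fintype V] [DecidableRel G.Adj]
    (hroot : TreeBlockSetting G ET blocks roots) (hE : (ET : Set (Sym2 V)) ⊆ G.edgeSet) :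
    ∃ R, IsRootSet G ET R ∧ Set.range roots = rootEdges ET R ∧
      ∀ i, blocks i = hangBlock ET R (roots i) :=
  hroot.elim (·.exists_isRootSet hE) (·.exists_isRootSet hE)

end RootSet

/-! ### Nearly equal fibres -/

section Fibres

lemma abs_card_fibre_div_mul_card_image_sub_one_le {Ω β : Type*} [Fintype Ω] [DecidableEq β]
    (φ : Ω → β) {K : ℝ}
    (hK : ∀ σ η, (#(univ.filter fun ω => φ ω = φ σ) : ℝ) ≤ K * #(univ.filter fun ω => φ ω = φ η))
    (σ : Ω) :
    |#(univ.filter fun ω => φ ω = φ σ) / (Fintype.card Ω : ℝ) * #(univ.image φ) - 1| ≤ K - 1 := by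
  have hN : (Fintype.card Ω : ℝ) = ∑ b ∈ univ.image φ, (#(univ.filter fun ω => φ ω = b) : ℝ) := by
    rw [← card_univ, card_eq_sum_card_image φ, Nat.cast_sum]
  have hNpos : (0 : ℝ) < Fintype.card Ω := by
    exact_mod_cast Fintype.card_pos_iff.mpr ⟨σ⟩
  have hupper : (#(univ.filter fun ω => φ ω = φ σ) : ℝ) * #(univ.image φ) ≤
      K * Fintype.card Ω := by
    rw [hN, mul_sum, mul_comm, ← nsmul_eq_mul]
    refine card_nsmul_le_sum _ _ _ fun b hb => ?_
    obtain ⟨η, -, rfl⟩ := mem_image.mp hb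
    exact hK σ η
  have hlower : (Fintype.card Ω : ℝ) ≤
      K * (#(univ.filter fun ω => φ ω = φ σ) * #(univ.image φ)) := by
    rw [hN, mul_comm (Nat.cast _), mul_left_comm, ← nsmul_eq_mul]
    refine sum_le_card_nsmul _ _ _ fun b hb => ?_
    obtain ⟨η, -, rfl⟩ := mem_image.mp hb
    exact hK η σ
  rw [div_mul_eq_mul_div]
  set t : ℝ := #(univ.filter fun ω => φ ω = φ σ) * #(univ.image φ) / Fintype.card Ω
  have htK : t ≤ K := (div_le_iff₀ hNpos).mpr hupper
  have hKt : 1 ≤ K * t := by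
    rwa [← mul_div_assoc, one_le_div₀ hNpos]
  have ht : 0 ≤ t := by positivity
  have hsum : 2 ≤ K + t := by
    refine (sq_le_sq₀ zero_le_two (add_nonneg (ht.trans htK) ht)).mp ?_
    linarith [four_mul_le_sq_add K t]
  exact abs_le.mpr ⟨by linarith, by linarith⟩

end Fibres

section Colouring

variable {V : Type} {G : SimpleGraph V} {d : ℕ} {ET : Finset (Sym2 V)} {R : Finset V} {r : ℕ}
  {roots : Fin r → Sym2 V}

lemma ProperECol.isProperColouring_conflictGraph {k : ℕ} {σ : Sym2 V → Fin k} (hσ : ProperECol G σ)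
    (F : Finset (Sym2 V)) : IsProperColouring (conflictGraph G F) σ :=
  fun _ _ hfg => hσ _ hfg.1 _ hfg.2.1 hfg.2.2.1

variable [Fintype V] [DecidableEq V]

lemma ProperECol.mem_extensions_freeEdges {k : ℕ} {σ η : Sym2 V → Fin k} (hη : ProperECol G η) :
    σ ∈ extensions (conflictGraph G (rootEdges ET R)) (freeEdges ET R) η ↔
      (ProperECol G σ ∧ ∀ f ∉ ET, σ f = η f) ∧ ∀ f ∈ rootEdges ET R, σ f = η f := by
  rw [mem_extensions]
  constructor
  · rintro ⟨hσ, hση⟩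
    have hroot : ∀ f ∈ rootEdges ET R, σ f = η f := fun f hf => hση f fun hfE => hfE.2 hf
    refine ⟨⟨fun f hf g hg hfg => ?_, fun f hf => hση f fun hfE => hf hfE.1⟩, hroot⟩
    by_cases hF : f ∈ rootEdges ET R ∧ g ∈ rootEdges ET R
    · rw [hroot f hF.1, hroot g hF.2]
      exact hη f hf g hg hfg
    · exact hσ ⟨hf, hg, hfg, hF⟩
  · rintro ⟨⟨hσ, hση⟩, hroot⟩
    refine ⟨hσ.isProperColouring_conflictGraph _, fun f hf => ?_⟩
    by_cases hfT : f ∈ ET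
    · exact hroot f (by_contra fun hfF => hf ⟨hfT, hfF⟩)
    · exact hση f hfT

variable {μ : Sym2 V → Fin (d + 1)}

lemma card_filter_resE_eq (hroots : Set.range roots = rootEdges ET R)
    (η : OmegaE G (d + 1) ET μ) :
    #(univ.filter fun σ => resE G d ET μ roots σ = resE G d ET μ roots η) =
      #(extensions (conflictGraph G (rootEdges ET R)) (freeEdges ET R) η.1) := by
  have hres (σ : OmegaE G (d + 1) ET μ) : resE G d ET μ roots σ = resE G d ET μ roots η ↔
      ∀ f ∈ rootEdges ET R, σ.1 f = η.1 f := by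
    simp only [← mem_coe, ← hroots, Set.forall_mem_range, funext_iff, resE]
  rw [← card_image_of_injective _ Subtype.val_injective]
  congr 1
  ext σ
  simp only [mem_image, mem_filter, mem_univ, true_and, hres, η.2.1.mem_extensions_freeEdges]
  constructor
  · rintro ⟨σ, hσ, rfl⟩
    exact ⟨⟨σ.2.1, fun f hf => (σ.2.2 f hf).trans (η.2.2 f hf).symm⟩, hσ⟩
  · rintro ⟨⟨hσ, hση⟩, hroot⟩
    exact ⟨⟨σ, hσ, fun f hf => (hση f hf).trans (η.2.2 f hf)⟩, hroot, rfl⟩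

lemma div_sq_sub_one_le_nine_div {d : ℝ} (hd : 3 ≤ d) :
    ((d - 1) / (d - 2)) ^ 2 - 1 ≤ 9 / d := by
  rw [div_pow, div_sub_one (by nlinarith), div_le_div_iff₀ (by nlinarith) (by linarith)]
  have hfactor : 0 ≤ (7 * d - 12) * (d - 3) := mul_nonneg (by linarith) (by linarith)
  linarith

theorem tree_projected_distribution_near_uniform_general [DecidableRel G.Adj] (hG : G.IsAcyclic)
    (hd : 3 ≤ d) (hT : #(intBd G ET) ≤ 2) (hR : IsRootSet G ET R)
    (hroots : Set.range roots = rootEdges ET R)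
    (hB : ∀ e ∈ rootEdges ET R, IsSplitting G (hangBlock ET R e))
    (σh : ↥(Set.range (resE G d ET μ roots))) :
    |piRE G d ET μ roots σh * (Fintype.card ↥(Set.range (resE G d ET μ roots)) : ℝ) - 1| ≤
      9 / d := by
  obtain ⟨_, σ, rfl⟩ := σh
  have hfibre (σ η : OmegaE G (d + 1) ET μ) :
      (#(univ.filter fun ω => resE G d ET μ roots ω = resE G d ET μ roots σ) : ℝ) ≤
        ((d - 1) / (d - 2)) ^ 2 *
          #(univ.filter fun ω => resE G d ET μ roots ω = resE G d ET μ roots η) := by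
    have hle := card_extensions_le_sq_mul hG hT hR hB (by rw [Fintype.card_fin]; omega)
      (η.2.1.isProperColouring_conflictGraph _)
      fun f hf => (σ.2.2 f hf).trans (η.2.2 f hf).symm
    rw [card_filter_resE_eq hroots, card_filter_resE_eq hroots]
    convert hle using 4 <;> rw [Fintype.card_fin] <;> push_cast <;> ring
  rw [piRE, Fintype.card_subtype, ← Set.toFinset_card, Set.toFinset_range]
  exact (abs_card_fibre_div_mul_card_image_sub_one_le _ hfibre σ).trans
    (div_sq_sub_one_le_nine_div (by exact_mod_cast hd))

end Colouring

/-- in the tree block setting, assuming (A1) and (A2), there is a universal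
constant `C₀ > 0` such that the projection `π_𝓡` of the uniform distribution on `Ω^μ_E`
onto `F` is uniform up to a multiplicative error `C₀/d`:
`|π_𝓡(σ̂)·|Ω_𝓡| − 1| ≤ C₀/d` for every `σ̂ ∈ Ω_𝓡`. -/
theorem tree_projected_distribution_near_uniform :
    ∃ C0 : ℝ, 0 < C0 ∧
      ∀ (V : Type) [Fintype V] [DecidableEq V] (G : SimpleGraph V) [DecidableRel G.Adj]
        (d : ℕ), 3 ≤ d → G.IsTree → (∀ v : V, 2 ≤ G.degree v → G.degree v = d) →
      ∀ ET : Finset (Sym2 V), IsSplitting G ET → 2 ≤ ET.card →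
      ∀ μ : Sym2 V → Fin (d + 1), ProperECol G μ →
      ∀ (r : ℕ) (blocks : Fin r → Finset (Sym2 V)) (roots : Fin r → Sym2 V),
        TreeBlockSetting G ET blocks roots →
        (∀ i, IsSplitting G (blocks i)) →
        (∀ (i : Fin r) (σ : OmegaE G (d + 1) ET μ),
          IsErgodicGen (treeGen G (d + 1) (blocks i) σ.1)) →
      ∀ σh : ↥(Set.range (resE G d ET μ roots)),
        |piRE G d ET μ roots σh * (Fintype.card ↥(Set.range (resE G d ET μ roots)) : ℝ) - 1|
          ≤ C0 / d := by
  refine ⟨9, by norm_num, ?_⟩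
  intro V _ _ G _ d hd hG _ ET hT _ μ _ r blocks roots hset hB _ σh
  obtain ⟨R, hR, hroots, hblocks⟩ := hset.exists_isRootSet fun f hf =>
    SimpleGraph.mem_edgeFinset.mp (hT.1 hf)
  refine tree_projected_distribution_near_uniform_general hG.isAcyclic hd hT.card_intBd_le hR
    hroots (fun e he => ?_) σh
  obtain ⟨i, rfl⟩ := hroots.ge he
  exact hblocks i ▸ hB i
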